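/- arXiv:1607.05992 — 6 statements merged into one kernel-verified Lean document; each statement's English description precedes it below -/
import Mathlib

section
/- Let h : ℝ → ℝ be a C³ function. Then for every t ∈ ℝ, the derivative of the function t ↦ h(t)² (1 − h'(t)² + h(t) h''(t)) equals h(t) · ( h(t)² h'''(t) + h'(t) (2 + h(t) h''(t)) − 2 h'(t)³ ). In particular, if h satisfies the ODE h² h''' + h' (2 + h h'') − 2 h'³ = 0 on an interval, then h² (1 − h'² + h h'') is constant on that interval. -/
/-- `h²(1 − h'² + h h'')` is a prime integral of the ODE
`h² h''' + h'(2 + h h'') − 2 h'³ = 0`. -/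
theorem statement3 (h : ℝ → ℝ) (hh : ContDiff ℝ 3 h) :
    (∀ t : ℝ,
      HasDerivAt (fun u => (h u)^2 * (1 - (deriv h u)^2 + h u * deriv (deriv h) u))
        (h t * ((h t)^2 * deriv (deriv (deriv h)) t
          + deriv h t * (2 + h t * deriv (deriv h) t) - 2 * (deriv h t)^3)) t)
    ∧ ∀ s : Set ℝ, s.OrdConnected →
        (∀ t ∈ s, (h t)^2 * deriv (deriv (deriv h)) t
          + deriv h t * (2 + h t * deriv (deriv h) t) - 2 * (deriv h t)^3 = 0) →
        ∀ t ∈ s, ∀ u ∈ s,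
          (h t)^2 * (1 - (deriv h t)^2 + h t * deriv (deriv h) t)
            = (h u)^2 * (1 - (deriv h u)^2 + h u * deriv (deriv h) u) := by
  have h1 : ContDiff ℝ 2 (deriv h) := by
    have : ContDiff ℝ (2 + 1) h := by
      convert hh using 1
      norm_num
    exact (contDiff_succ_iff_deriv.1 this).2.2
  have h2 : ContDiff ℝ 1 (deriv (deriv h)) := by
    have : ContDiff ℝ (1 + 1) (deriv h) := by
      convert h1 using 1
      norm_num
    exact (contDiff_succ_iff_deriv.1 this).2.2
  have d0 : Differentiable ℝ h := hh.differentiable (by norm_num)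
  have d1 : Differentiable ℝ (deriv h) := h1.differentiable (by norm_num)
  have d2 : Differentiable ℝ (deriv (deriv h)) := h2.differentiable (by norm_num)
  have key : ∀ t : ℝ,
      HasDerivAt (fun u => (h u)^2 * (1 - (deriv h u)^2 + h u * deriv (deriv h) u))
        (h t * ((h t)^2 * deriv (deriv (deriv h)) t
          + deriv h t * (2 + h t * deriv (deriv h) t) - 2 * (deriv h t)^3)) t := by
    intro t
    have e0 := (d0 t).hasDerivAt
    have e1 := (d1 t).hasDerivAt
    have e2 := (d2 t).hasDerivAt
    have := (e0.fun_pow 2).fun_mul (((e1.fun_pow 2).const_sub 1).fun_add (e0.fun_mul e2))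
    refine this.congr_deriv ?_
    push_cast
    ring
  refine ⟨key, fun s hs hode t ht u hu => ?_⟩
  have hc : Convex ℝ s := hs.convex
  have := hc.norm_image_sub_le_of_norm_hasDerivWithin_le (C := 0)
    (fun x _ => (key x).hasDerivWithinAt)
    (fun x hx => by rw [hode x hx]; simp) hu ht
  rw [zero_mul] at this
  exact sub_eq_zero.1 (norm_le_zero_iff.1 this)
end

section
/- Let h : [0, ∞) → ℝ be a smooth function with h(0) = 0, h'(0) = 1 and h(t) > 0 for all t > 0, and suppose h satisfies the ODE h(t)² h'''(t) + h'(t)(2 + h(t) h''(t)) − 2 h'(t)³ = 0 for all t > 0. Then 1 − h'(t)² + h(t) h''(t) = 0 for all t > 0. -/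
/-- If `h : [0,∞) → ℝ` is smooth with `h(0) = 0`, `h'(0) = 1`, `h > 0` on `(0,∞)` and
satisfies `h² h''' + h'(2 + h h'') − 2 h'³ = 0` on `(0,∞)`, then
`1 − h'² + h h'' = 0` on `(0,∞)`. -/
theorem statement4
    (h : ℝ → ℝ) (hsm : ContDiffOn ℝ (⊤ : ℕ∞) h (Set.Ici 0))
    (h0 : h 0 = 0) (h1 : derivWithin h (Set.Ici 0) 0 = 1)
    (hpos : ∀ t > (0:ℝ), 0 < h t)
    (hode : ∀ t > (0:ℝ),
      (h t)^2 * deriv (deriv (deriv h)) t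
        + deriv h t * (2 + h t * deriv (deriv h) t) - 2 * (deriv h t)^3 = 0) :
    ∀ t > (0:ℝ), 1 - (deriv h t)^2 + h t * deriv (deriv h) t = 0 := by
  have key : ∀ f : ℝ → ℝ, ContDiffOn ℝ (⊤ : ℕ∞) f (Set.Ici 0) →
      ContDiffOn ℝ (⊤ : ℕ∞) (derivWithin f (Set.Ici 0)) (Set.Ici 0) := fun f hf =>
    hf.derivWithin (uniqueDiffOn_Ici 0) (by simp)
  have key2 : ∀ f : ℝ → ℝ, ∀ t > (0:ℝ), deriv f t = derivWithin f (Set.Ici 0) t := by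
    intro f t ht
    exact (derivWithin_of_mem_nhds (Ici_mem_nhds ht)).symm
  have key3 : ∀ f : ℝ → ℝ, ContDiffOn ℝ (⊤ : ℕ∞) f (Set.Ici 0) → ∀ t > (0:ℝ),
      HasDerivAt f (derivWithin f (Set.Ici 0) t) t := by
    intro f hf t ht
    rw [← key2 f t ht]
    exact ((hf.contDiffAt (Ici_mem_nhds ht)).differentiableAt (by simp)).hasDerivAt
  have key4 : ∀ f g : ℝ → ℝ, (∀ t > (0:ℝ), f t = g t) → ∀ t > (0:ℝ), deriv f t = deriv g t := by
    intro f g hfg t ht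
    apply Filter.EventuallyEq.deriv_eq
    filter_upwards [Ioi_mem_nhds ht] with x hx using hfg x hx
  have e1 := key2 h
  have c1 := key h hsm
  have d0 := key3 h hsm
  generalize derivWithin h (Set.Ici 0) = g1 at *
  have e2 : ∀ t > (0:ℝ), deriv (deriv h) t = derivWithin g1 (Set.Ici 0) t := fun t ht =>
    (key4 _ _ e1 t ht).trans (key2 g1 t ht)
  have c2 := key g1 c1
  have d1 := key3 g1 c1
  generalize derivWithin g1 (Set.Ici 0) = g2 at *
  have e3 : ∀ t > (0:ℝ), deriv (deriv (deriv h)) t = derivWithin g2 (Set.Ici 0) t := fun t ht =>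
    (key4 _ _ e2 t ht).trans (key2 g2 t ht)
  have d2 := key3 g2 c2
  generalize derivWithin g2 (Set.Ici 0) = g3 at *
  intro t ht
  rw [e1 t ht, e2 t ht]
  have hc0 := hsm.continuousOn
  have hc1 := c1.continuousOn
  have hc2 := c2.continuousOn
  have hF : ContinuousOn (fun x => (h x)^2 * (1 - (g1 x)^2 + h x * g2 x)) (Set.Ici 0) := by
    fun_prop
  obtain ⟨c, hc, hs⟩ := exists_hasDerivAt_eq_slope
    (fun x => (h x)^2 * (1 - (g1 x)^2 + h x * g2 x)) (fun _ => 0) ht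
    (hF.mono Set.Icc_subset_Ici_self) (by
      intro x hx
      have hx0 : x > 0 := hx.1
      have ho := hode x hx0
      rw [e1 x hx0, e2 x hx0, e3 x hx0] at ho
      have := ((d0 x hx0).pow 2).mul
        ((((d1 x hx0).pow 2).const_sub 1).add ((d0 x hx0).mul (d2 x hx0)))
      refine this.congr_deriv ?_
      simp only [Pi.pow_apply, Pi.mul_apply, Pi.add_apply]
      push_cast
      linear_combination h x * ho)
  have hp := hpos t ht
  have : (h t)^2 * (1 - (g1 t)^2 + h t * g2 t) = 0 := by
    have h3 := hs.symm
    rw [div_eq_zero_iff] at h3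
    rcases h3 with h3 | h3
    · simpa [h0] using h3
    · linarith
  rcases mul_eq_zero.mp this with h3 | h3
  · exact absurd h3 (by positivity)
  · exact h3
end

section
/- Let h : [0, ∞) → ℝ be a smooth function with h(0) = 0, h'(0) = 1 and h(t) > 0 for all t > 0, and suppose h satisfies the ODE h(t)² h'''(t) + h'(t)(2 + h(t) h''(t)) − 2 h'(t)³ = 0 for all t > 0. Then the radial curvature function K(t) = − h''(t)/h(t) is constant on (0, ∞); that is, for all s, t > 0 one has h''(s)/h(s) = h''(t)/h(t). -/
theorem aux_const (f : ℝ → ℝ) (a b : ℝ) (hab : a < b) (hc : ContinuousOn f (Set.Icc a b))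
    (hd : ∀ x ∈ Set.Ioo a b, HasDerivAt f 0 x) : f b = f a := by
  obtain ⟨c, _, h⟩ := exists_hasDerivAt_eq_slope f (fun _ => 0) hab hc hd
  have : b - a ≠ 0 := by linarith
  field_simp at h
  linarith

/-- If `h : [0,∞) → ℝ` is smooth with `h(0) = 0`, `h'(0) = 1`, `h > 0` on `(0,∞)` and
satisfies `h² h''' + h'(2 + h h'') − 2 h'³ = 0` on `(0,∞)`, then the radial curvature
`K = −h''/h` is constant on `(0,∞)`. -/
theorem statement5
    (h : ℝ → ℝ) (hsm : ContDiffOn ℝ (⊤ : ℕ∞) h (Set.Ici 0))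
    (h0 : h 0 = 0) (h1 : derivWithin h (Set.Ici 0) 0 = 1)
    (hpos : ∀ t > (0:ℝ), 0 < h t)
    (hode : ∀ t > (0:ℝ),
      (h t)^2 * deriv (deriv (deriv h)) t
        + deriv h t * (2 + h t * deriv (deriv h) t) - 2 * (deriv h t)^3 = 0) :
    ∀ s > (0:ℝ), ∀ t > (0:ℝ),
      deriv (deriv h) s / h s = deriv (deriv h) t / h t := by
  have hU : UniqueDiffOn ℝ (Set.Ici (0:ℝ)) := uniqueDiffOn_Ici 0
  have hn : ∀ t > (0:ℝ), Set.Ici (0:ℝ) ∈ nhds t := fun t ht => Ici_mem_nhds ht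
  have c1 : ContDiffOn ℝ (⊤ : ℕ∞) (derivWithin h (Set.Ici 0)) (Set.Ici 0) :=
    hsm.derivWithin hU (by simp)
  have c2 : ContDiffOn ℝ (⊤ : ℕ∞)
      (derivWithin (derivWithin h (Set.Ici 0)) (Set.Ici 0)) (Set.Ici 0) :=
    c1.derivWithin hU (by simp)
  have o0 : ContDiffOn ℝ (⊤ : ℕ∞) h (Set.Ioi 0) := hsm.mono Set.Ioi_subset_Ici_self
  have o1 : ContDiffOn ℝ (⊤ : ℕ∞) (deriv h) (Set.Ioi 0) :=
    o0.deriv_of_isOpen isOpen_Ioi (by simp)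
  have o2 : ContDiffOn ℝ (⊤ : ℕ∞) (deriv (deriv h)) (Set.Ioi 0) :=
    o1.deriv_of_isOpen isOpen_Ioi (by simp)
  have d : ∀ f : ℝ → ℝ, ContDiffOn ℝ (⊤ : ℕ∞) f (Set.Ioi 0) → ∀ t > (0:ℝ),
      HasDerivAt f (deriv f t) t := fun f hf t ht =>
    ((hf.differentiableOn (by simp)).differentiableAt (Ioi_mem_nhds ht)).hasDerivAt
  have e1 : ∀ t > (0:ℝ), derivWithin h (Set.Ici 0) t = deriv h t := fun t ht =>
    derivWithin_of_mem_nhds (hn t ht)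
  have e2 : ∀ t > (0:ℝ), derivWithin (derivWithin h (Set.Ici 0)) (Set.Ici 0) t
      = deriv (deriv h) t := fun t ht => by
    rw [derivWithin_of_mem_nhds (hn t ht)]
    apply Filter.EventuallyEq.deriv_eq
    filter_upwards [Ioi_mem_nhds ht] with x hx using e1 x hx
  have key : ∀ t > (0:ℝ), (deriv h t)^2 - 1 - h t * deriv (deriv h) t = 0 := by
    intro t ht
    have hB := aux_const (fun x => (h x)^2 * ((derivWithin h (Set.Ici 0) x)^2 - 1
      - h x * derivWithin (derivWithin h (Set.Ici 0)) (Set.Ici 0) x)) 0 t ht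
      (ContinuousOn.mono (s := Set.Ici 0)
        ((hsm.continuousOn.pow 2).mul (((c1.continuousOn.pow 2).sub continuousOn_const).sub
          (hsm.continuousOn.mul c2.continuousOn))) Set.Icc_subset_Ici_self)
      (by
        intro x hx
        have hx0 : 0 < x := hx.1
        have D := ((d h o0 x hx0).pow 2).mul ((((d _ o1 x hx0).pow 2).sub_const 1).sub
          ((d h o0 x hx0).mul (d _ o2 x hx0)))
        refine (D.congr_of_eventuallyEq ?_).congr_deriv ?_
        · filter_upwards [Ioi_mem_nhds hx0] with y hy
          simp [e1 y hy, e2 y hy]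
        · have := hode x hx0
          simp
          linear_combination (-h x) * this)
    simp only [h0, e1 t ht, e2 t ht] at hB
    have := hpos t ht
    have h2 : (h t)^2 ≠ 0 := by positivity
    have : (h t)^2 * ((deriv h t)^2 - 1 - h t * deriv (deriv h) t) = 0 := by
      rw [hB]; ring
    exact (mul_eq_zero.mp this).resolve_left h2
  have q : ∀ t > (0:ℝ), deriv (deriv h) t / h t = ((deriv h t)^2 - 1) / (h t)^2 := by
    intro t ht
    have := hpos t ht
    have := key t ht
    field_simp
    linarith
  have dq : ∀ x > (0:ℝ), HasDerivAt (fun t => ((deriv h t)^2 - 1) / (h t)^2) 0 x := by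
    intro x hx
    have hp := hpos x hx
    have D := (((d _ o1 x hx).pow 2).sub_const 1).div ((d h o0 x hx).pow 2)
      (by simp; exact hp.ne')
    refine D.congr_deriv ?_
    have := key x hx
    simp
    left
    linear_combination (-2 * h x * deriv h x) * this
  have main : ∀ s > (0:ℝ), ∀ t > (0:ℝ), s < t →
      deriv (deriv h) t / h t = deriv (deriv h) s / h s := by
    intro s hs t ht hst
    rw [q s hs, q t ht]
    exact aux_const (fun t => ((deriv h t)^2 - 1) / (h t)^2) s t hst
      (fun x hx => (dq x (lt_of_lt_of_le hs hx.1)).continuousAt.continuousWithinAt)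
      (fun x hx => dq x (lt_trans hs hx.1))
  intro s hs t ht
  rcases lt_trichotomy s t with hl | hl | hl
  · exact (main s hs t ht hl).symm
  · rw [hl]
  · exact main t ht s hs hl
end

section
/- Let h : ℝ → ℝ be a smooth function satisfying h(t)² h'''(t) + h'(t)(2 + h(t) h''(t)) − 2 h'(t)³ = 0 for all t, and let α : (0, ∞) → ℝ be a smooth function satisfying the conformality equation α'(r) = h(α(r))/r for all r > 0. Then α satisfies, for all r > 0, the fourth-order equation: 3 h(α) ( −2 r α' h''(α) − r² (α')² h'''(α) − 2 r² α'' h''(α) + 3 h'(α)³ ) + r ( 3 r α'' − 3 α' − 6 r α'' h'(α)² − 9 r (α')² h'(α) h''(α) − 6 α' h'(α)² + 6 r² α''' + r⁴⁽ᵗʰ⁾: r³ α'''' ) + 9 h(α)² h'(α) h''(α) = 0, i.e. 3h(α)(−2rα'h''(α) − r²(α')²h'''(α) − 2r²α''h''(α) + 3h'(α)³) + 3r²α'' − 3rα' − 6r²α''h'(α)² − 9r²(α')²h'(α)h''(α) − 6rα'h'(α)² + 6r³α''' + r⁴α'''' + 9h(α)²h'(α)h''(α) = 0. -/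
/-- If the warping function `h` satisfies `h² h''' + h'(2 + h h'') − 2 h'³ = 0` and
`α` satisfies the conformality equation `α'(r) = h(α(r))/r` on `(0,∞)`, then `α`
satisfies the fourth-order biharmonicity equation of rotationally symmetric maps
from `ℝ⁴` to the model with warping function `h`. -/
theorem statement9 (h : ℝ → ℝ) (hh : ContDiff ℝ (⊤ : ℕ∞) h)
    (hode : ∀ t : ℝ,
      (h t)^2 * deriv (deriv (deriv h)) t
        + deriv h t * (2 + h t * deriv (deriv h) t) - 2 * (deriv h t)^3 = 0)
    (α : ℝ → ℝ) (hα : ContDiffOn ℝ (⊤ : ℕ∞) α (Set.Ioi 0))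
    (hconf : ∀ r > (0:ℝ), deriv α r = h (α r) / r) :
    ∀ r > (0:ℝ),
      3 * h (α r) * (-2 * r * deriv α r * deriv (deriv h) (α r)
          - r^2 * (deriv α r)^2 * deriv (deriv (deriv h)) (α r)
          - 2 * r^2 * deriv (deriv α) r * deriv (deriv h) (α r)
          + 3 * (deriv h (α r))^3)
        + 3 * r^2 * deriv (deriv α) r - 3 * r * deriv α r
        - 6 * r^2 * deriv (deriv α) r * (deriv h (α r))^2
        - 9 * r^2 * (deriv α r)^2 * deriv h (α r) * deriv (deriv h) (α r)
        - 6 * r * deriv α r * (deriv h (α r))^2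
        + 6 * r^3 * deriv (deriv (deriv α)) r
        + r^4 * deriv (deriv (deriv (deriv α))) r
        + 9 * (h (α r))^2 * deriv h (α r) * deriv (deriv h) (α r) = 0 := by
  have hc1 : ContDiff ℝ (⊤ : ℕ∞) (deriv h) := (contDiff_infty_iff_deriv.1 hh).2
  have hc2 : ContDiff ℝ (⊤ : ℕ∞) (deriv (deriv h)) := (contDiff_infty_iff_deriv.1 hc1).2
  have d0 : ∀ t, HasDerivAt h (deriv h t) t := fun t =>
    ((contDiff_infty_iff_deriv.1 hh).1 t).hasDerivAt
  have d1 : ∀ t, HasDerivAt (deriv h) (deriv (deriv h) t) t := fun t =>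
    ((contDiff_infty_iff_deriv.1 hc1).1 t).hasDerivAt
  have d2 : ∀ t, HasDerivAt (deriv (deriv h)) (deriv (deriv (deriv h)) t) t := fun t =>
    ((contDiff_infty_iff_deriv.1 hc2).1 t).hasDerivAt
  have da : ∀ r > (0:ℝ), HasDerivAt α (h (α r) / r) r := by
    intro r hr
    rw [← hconf r hr]
    exact (((hα.differentiableOn (by simp)) r hr).differentiableAt
      (Ioi_mem_nhds hr)).hasDerivAt
  have e0 : ∀ r > (0:ℝ), HasDerivAt (fun x => h (α x)) (deriv h (α r) * (h (α r) / r)) r :=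
    fun r hr => (d0 (α r)).comp r (da r hr)
  have e1 : ∀ r > (0:ℝ), HasDerivAt (fun x => deriv h (α x))
      (deriv (deriv h) (α r) * (h (α r) / r)) r :=
    fun r hr => (d1 (α r)).comp r (da r hr)
  have e2 : ∀ r > (0:ℝ), HasDerivAt (fun x => deriv (deriv h) (α x))
      (deriv (deriv (deriv h)) (α r) * (h (α r) / r)) r :=
    fun r hr => (d2 (α r)).comp r (da r hr)
  have key : ∀ (f g g' : ℝ → ℝ), (∀ r > (0:ℝ), f r = g r) →
      (∀ r > (0:ℝ), HasDerivAt g (g' r) r) → ∀ r > (0:ℝ), deriv f r = g' r := by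
    intro f g g' hfg hg r hr
    have : f =ᶠ[nhds r] g := by
      filter_upwards [Ioi_mem_nhds hr] with x hx using hfg x hx
    rw [this.deriv_eq, (hg r hr).deriv]
  have a2 := key (deriv α) (fun r => h (α r) / r)
    (fun r => (h (α r) * deriv h (α r) - h (α r)) / r ^ 2) hconf (by
      intro r hr
      refine ((e0 r hr).div (hasDerivAt_id r) hr.ne').congr_deriv ?_
      have := hr.ne'
      simp only [id]
      field_simp)
  have a3 := key _ _
    (fun r => (h (α r) * deriv h (α r) ^ 2 + h (α r) ^ 2 * deriv (deriv h) (α r)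
      - 3 * (h (α r) * deriv h (α r)) + 2 * h (α r)) / r ^ 3) a2 (by
      intro r hr
      refine ((((e0 r hr).mul (e1 r hr)).sub (e0 r hr)).div ((hasDerivAt_id r).pow 2)
        (pow_ne_zero 2 hr.ne')).congr_deriv ?_
      have := hr.ne'
      simp
      field_simp
      ring)
  have a4 := key _ _
    (fun r => (h (α r) * deriv h (α r) ^ 3
      + 4 * h (α r) ^ 2 * deriv h (α r) * deriv (deriv h) (α r)
      + h (α r) ^ 3 * deriv (deriv (deriv h)) (α r)
      - 6 * (h (α r) * deriv h (α r) ^ 2 + h (α r) ^ 2 * deriv (deriv h) (α r))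
      + 11 * (h (α r) * deriv h (α r)) - 6 * h (α r)) / r ^ 4) a3 (by
      intro r hr
      refine (((((((e0 r hr).mul ((e1 r hr).pow 2)).add (((e0 r hr).pow 2).mul (e2 r hr))).sub
        (((e0 r hr).mul (e1 r hr)).const_mul 3)).add ((e0 r hr).const_mul 2)).div
        ((hasDerivAt_id r).pow 3) (pow_ne_zero 3 hr.ne'))).congr_deriv ?_
      have := hr.ne'
      simp
      field_simp
      ring)
  intro r hr
  have o := hode (α r)
  rw [a4 r hr, a3 r hr, a2 r hr, hconf r hr]
  have := hr.ne'
  field_simp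
  linear_combination (-2 * h (α r)) * o
end

section
/- Let c > 0 and let α : (0, ∞) → ℝ be given by α(r) = 2 arctan(c² r), and set h(t) = sin t. Then for all r > 0: 3 sin(α)(−2rα'h''(α) − r²(α')²h'''(α) − 2r²α''h''(α) + 3cos(α)³) + 3r²α'' − 3rα' − 6r²α''cos(α)² − 9r²(α')²cos(α)h''(α) − 6rα'cos(α)² + 6r³α''' + r⁴α'''' + 9sin(α)²cos(α)h''(α) = 0, where h''(α) = −sin(α) and h'''(α) = −cos(α). -/
/-- The profile `α(r) = 2 arctan(c² r)` satisfies the fourth-order biharmonicity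
equation of rotationally symmetric maps from `ℝ⁴` to `S⁴` (warping function
`h = sin`, so that `h''(α) = −sin α` and `h'''(α) = −cos α`). -/
theorem statement10 (c : ℝ) (hc : 0 < c) (α : ℝ → ℝ)
    (hα : ∀ r, α r = 2 * Real.arctan (c^2 * r)) :
    ∀ r > (0:ℝ),
      3 * Real.sin (α r) * (-2 * r * deriv α r * (-Real.sin (α r))
          - r^2 * (deriv α r)^2 * (-Real.cos (α r))
          - 2 * r^2 * deriv (deriv α) r * (-Real.sin (α r))
          + 3 * (Real.cos (α r))^3)
        + 3 * r^2 * deriv (deriv α) r - 3 * r * deriv α r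
        - 6 * r^2 * deriv (deriv α) r * (Real.cos (α r))^2
        - 9 * r^2 * (deriv α r)^2 * Real.cos (α r) * (-Real.sin (α r))
        - 6 * r * deriv α r * (Real.cos (α r))^2
        + 6 * r^3 * deriv (deriv (deriv α)) r
        + r^4 * deriv (deriv (deriv (deriv α))) r
        + 9 * (Real.sin (α r))^2 * Real.cos (α r) * (-Real.sin (α r)) = 0 := by
  intro r hr
  obtain ⟨a, ha⟩ : ∃ a, a = c ^ 2 := ⟨_, rfl⟩
  rw [← ha] at hα
  have hq : ∀ x : ℝ, 1 + a ^ 2 * x ^ 2 ≠ 0 := fun x => by positivity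
  have hQ : ∀ x : ℝ, HasDerivAt (fun y : ℝ => 1 + a ^ 2 * y ^ 2) (2 * a ^ 2 * x) x := by
    intro x
    have h := (((hasDerivAt_id' x).fun_pow 2).const_mul (a ^ 2)).const_add 1
    refine h.congr_deriv ?_
    push_cast
    ring
  have h1 : deriv α = fun x => 2 * a / (1 + a ^ 2 * x ^ 2) := by
    funext x
    rw [funext hα]
    have h := (((hasDerivAt_id' x).const_mul a).arctan).const_mul 2
    rw [h.deriv]
    have := hq x
    rw [mul_pow]
    field_simp
  have h2 : deriv (deriv α) = fun x => -4 * a ^ 3 * x / (1 + a ^ 2 * x ^ 2) ^ 2 := by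
    funext x
    rw [h1]
    have h := (hasDerivAt_const x (2 * a)).fun_div (hQ x) (hq x)
    rw [h.deriv]
    have := hq x
    field_simp
    ring
  have h3 : deriv (deriv (deriv α)) =
      fun x => a ^ 3 * (12 * a ^ 2 * x ^ 2 - 4) / (1 + a ^ 2 * x ^ 2) ^ 3 := by
    funext x
    rw [h2]
    have h := ((hasDerivAt_id' x).const_mul (-4 * a ^ 3)).fun_div ((hQ x).fun_pow 2)
      (pow_ne_zero 2 (hq x))
    rw [h.deriv]
    have := hq x
    field_simp
    push_cast
    ring
  have h4 : deriv (deriv (deriv (deriv α))) =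
      fun x => 48 * a ^ 5 * x * (1 - a ^ 2 * x ^ 2) / (1 + a ^ 2 * x ^ 2) ^ 4 := by
    funext x
    rw [h3]
    have h := (((((hasDerivAt_id' x).fun_pow 2).const_mul (12 * a ^ 2)).sub_const 4).const_mul
      (a ^ 3)).fun_div ((hQ x).fun_pow 3) (pow_ne_zero 3 (hq x))
    refine h.deriv.trans ?_
    have := hq x
    field_simp
    push_cast
    ring
  have hcos : Real.cos (α r) = (1 - a ^ 2 * r ^ 2) / (1 + a ^ 2 * r ^ 2) := by
    rw [hα, Real.cos_two_mul, Real.cos_sq_arctan, mul_pow]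
    have := hq r
    field_simp
    ring
  have hsin : Real.sin (α r) = 2 * a * r / (1 + a ^ 2 * r ^ 2) := by
    have h := Real.cos_sq_arctan (a * r)
    have h0 := (Real.cos_arctan_pos (a * r)).ne'
    have ht := Real.tan_arctan (a * r)
    rw [Real.tan_eq_sin_div_cos, div_eq_iff h0] at ht
    rw [hα, Real.sin_two_mul, ht]
    have e : 2 * (a * r * Real.cos (Real.arctan (a * r))) * Real.cos (Real.arctan (a * r))
      = 2 * (a * r) * Real.cos (Real.arctan (a * r)) ^ 2 := by ring
    rw [e, h, mul_pow]
    have := hq r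
    field_simp
  rw [h4, h3, h2, h1, hcos, hsin]
  have := hq r
  field_simp
  ring
end

section
/- Let α : [0, ∞) → ℝ be continuous with α(0) = 0, differentiable on (0, ∞), and suppose that α'(r) = sin(α(r))/r for all r > 0 and that sin(2α(r)) · sin⁴(α(r)/2) = 0 for all r > 0. Then α(r) = 0 for all r ≥ 0. -/
/-- If `α` is continuous on `[0,∞)` with `α(0) = 0`, satisfies the conformality
equation `α'(r) = sin(α(r))/r` on `(0,∞)` and the condition
`sin(2α) sin⁴(α/2) = 0` on `(0,∞)`, then `α ≡ 0`. -/
theorem statement12 (α : ℝ → ℝ)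
    (hcont : ContinuousOn α (Set.Ici 0)) (h0 : α 0 = 0)
    (hder : ∀ r > (0:ℝ), HasDerivAt α (Real.sin (α r) / r) r)
    (heq : ∀ r > (0:ℝ), Real.sin (2 * α r) * (Real.sin (α r / 2))^4 = 0) :
    ∀ r ≥ (0:ℝ), α r = 0 := by
  intro r hr
  by_contra hne
  have hc : ContinuousOn (fun x => |α x|) (Set.Icc 0 r) :=
    (hcont.mono Set.Icc_subset_Ici_self).abs
  have hpos : 0 < |α r| := abs_pos.mpr hne
  have hm : 0 < min |α r| 1 := lt_min hpos one_pos
  have hmem : min |α r| 1 ∈ Set.Icc |α 0| |α r| := by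
    rw [h0, abs_zero]
    exact ⟨hm.le, min_le_left _ _⟩
  obtain ⟨s, hs, hsv⟩ := intermediate_value_Icc hr hc hmem
  have hsv : |α s| = min |α r| 1 := hsv
  have hspos : 0 < |α s| := hsv ▸ hm
  have hs1 : |α s| ≤ 1 := hsv ▸ min_le_right _ _
  have hs0 : 0 < s := by
    rcases hs.1.lt_or_eq with h | h
    · exact h
    · rw [← h, h0, abs_zero] at hspos
      exact absurd hspos (lt_irrefl _)
  have hα : α s ≠ 0 := abs_pos.mp hspos
  have hpi := Real.pi_gt_three
  obtain ⟨hl, hu⟩ := abs_le.mp hs1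
  rcases mul_eq_zero.mp (heq s hs0) with h | h
  · have := (Real.sin_eq_zero_iff_of_lt_of_lt (by linarith) (by linarith)).mp h
    exact hα (by linarith)
  · have h := (pow_eq_zero_iff (by norm_num)).mp h
    have := (Real.sin_eq_zero_iff_of_lt_of_lt (by linarith) (by linarith)).mp h
    exact hα (by linarith)
end
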